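/- Suppose u ∈ 𝒰(x) is a feasible suboptimal control sequence whose suboptimality is bounded by β > 0, i.e., J(x, u) ≤ J*(x) + β. Then J*(f(x, u_0)) − J*(x) ≤ β − xᵀ Q x. In particular, for any state x with xᵀ Q x > β, the optimal value strictly decreases along the closed loop: J*(f(x, u_0)) < J*(x). -/

import Mathlib

/-!
The proof is the standard shift argument. For a feasible `u` at `x`, drop `u_0` and append the
terminal control `w = κ(x̄_N)`; the resulting sequence (`mpcShift`) follows the old prediction
shifted by one step (`mpcTraj_shift`) and ends in `f(x̄_N, w)`. It is feasible at `f(x, u_0)`: the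
state `x̄_N` lies in `X_f ⊆ X`, and the terminal decrease condition makes `X_f` invariant under `κ`.
The two cost sums telescope, and the terminal decrease condition bounds the added stage cost, so
`J(f(x, u_0), shifted) ≤ J(x, u) - xᵀ Q x - u_0ᵀ R u_0`. Since costs are nonnegative
(`mpcCost_nonneg`), the real infimum `J*(f(x, u_0))` is a genuine lower bound for the left side,
and the suboptimality bound on `J(x, u)` concludes.
-/

open Matrix

/-- Predicted trajectory of the discrete-time system `x⁺ = f(x,u)`:
`x̄_0 = x`, `x̄_{i+1} = f(x̄_i, u_i)`. -/
def mpcTraj {n m : ℕ} (f : (Fin n → ℝ) → (Fin m → ℝ) → (Fin n → ℝ))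
    (x : Fin n → ℝ) (u : ℕ → Fin m → ℝ) : ℕ → Fin n → ℝ
  | 0 => x
  | i + 1 => f (mpcTraj f x u i) (u i)

/-- MPC cost `J(x,u) = Σ_{i=0}^{N−1} (x̄_iᵀ Q x̄_i + u_iᵀ R u_i) + x̄_Nᵀ P x̄_N`. -/
noncomputable def mpcCost {n m : ℕ} (N : ℕ)
    (f : (Fin n → ℝ) → (Fin m → ℝ) → (Fin n → ℝ))
    (Q P : Matrix (Fin n) (Fin n) ℝ) (R : Matrix (Fin m) (Fin m) ℝ)
    (x : Fin n → ℝ) (u : ℕ → Fin m → ℝ) : ℝ :=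
  ∑ i ∈ Finset.range N,
      (mpcTraj f x u i ⬝ᵥ Q *ᵥ mpcTraj f x u i + u i ⬝ᵥ R *ᵥ u i)
    + mpcTraj f x u N ⬝ᵥ P *ᵥ mpcTraj f x u N

/-- Feasible set `𝒰(x)`: sequences whose predicted states satisfy the state
constraints `g(x̄_i) ≤ 0`, whose inputs satisfy `u_min ≤ u_i ≤ u_max` for
`i = 0,…,N−1`, and whose terminal state lies in `X_f = {x : xᵀ P x ≤ α}`. -/
def mpcFeasible {n m p : ℕ} (N : ℕ)
    (f : (Fin n → ℝ) → (Fin m → ℝ) → (Fin n → ℝ))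
    (P : Matrix (Fin n) (Fin n) ℝ)
    (g : (Fin n → ℝ) → (Fin p → ℝ)) (umin umax : Fin m → ℝ) (α : ℝ)
    (x : Fin n → ℝ) : Set (ℕ → Fin m → ℝ) :=
  {u | (∀ i < N, g (mpcTraj f x u i) ≤ 0) ∧
       (∀ i < N, umin ≤ u i ∧ u i ≤ umax) ∧
       mpcTraj f x u N ⬝ᵥ P *ᵥ mpcTraj f x u N ≤ α}

/-- Optimal value function `J*(x) = inf { J(x,u) : u ∈ 𝒰(x) }`. -/
noncomputable def mpcValue {n m p : ℕ} (N : ℕ)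
    (f : (Fin n → ℝ) → (Fin m → ℝ) → (Fin n → ℝ))
    (Q P : Matrix (Fin n) (Fin n) ℝ) (R : Matrix (Fin m) (Fin m) ℝ)
    (g : (Fin n → ℝ) → (Fin p → ℝ)) (umin umax : Fin m → ℝ) (α : ℝ)
    (x : Fin n → ℝ) : ℝ :=
  sInf (mpcCost N f Q P R x '' mpcFeasible N f P g umin umax α x)

/-- The shifted candidate sequence `(u_1, …, u_k, w)` for horizon `k + 1`: drop the first input of
`u` and append `w`. Entries beyond the horizon, which are irrelevant, are also set to `w`. -/
def mpcShift {m : ℕ} (k : ℕ) (u : ℕ → Fin m → ℝ) (w : Fin m → ℝ) : ℕ → Fin m → ℝ :=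
  fun i => if i < k then u (i + 1) else w

lemma mpcTraj_shift {n m : ℕ} (f : (Fin n → ℝ) → (Fin m → ℝ) → (Fin n → ℝ))
    (x : Fin n → ℝ) (u : ℕ → Fin m → ℝ) (w : Fin m → ℝ) (k i : ℕ) (hi : i ≤ k) :
    mpcTraj f (f x (u 0)) (mpcShift k u w) i = mpcTraj f x u (i + 1) := by
  induction i with
  | zero => rfl
  | succ i ih =>
    have hik : i < k := hi
    rw [mpcTraj, ih hik.le, mpcTraj.eq_2 f x u (i + 1), mpcShift, if_pos hik]

lemma mpcCost_nonneg {n m : ℕ} (N : ℕ)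
    (f : (Fin n → ℝ) → (Fin m → ℝ) → (Fin n → ℝ))
    {Q P : Matrix (Fin n) (Fin n) ℝ} {R : Matrix (Fin m) (Fin m) ℝ}
    (hQ : Q.PosSemidef) (hR : R.PosSemidef) (hP : P.PosSemidef)
    (x : Fin n → ℝ) (u : ℕ → Fin m → ℝ) : 0 ≤ mpcCost N f Q P R x u := by
  have q : ∀ z, 0 ≤ z ⬝ᵥ Q *ᵥ z := fun z => by simpa using hQ.dotProduct_mulVec_nonneg z
  have r : ∀ z, 0 ≤ z ⬝ᵥ R *ᵥ z := fun z => by simpa using hR.dotProduct_mulVec_nonneg z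
  have t : ∀ z, 0 ≤ z ⬝ᵥ P *ᵥ z := fun z => by simpa using hP.dotProduct_mulVec_nonneg z
  exact add_nonneg (Finset.sum_nonneg fun i _ => add_nonneg (q _) (r _)) (t _)

/-- **Strict Lyapunov decrease under suboptimal control** (inequalities (44)–(45) in the
proof of Theorem 2): if `u ∈ 𝒰(x)` is feasible with suboptimality bound
`J(x,u) ≤ J*(x) + β`, `β > 0`, then `J*(f(x,u_0)) − J*(x) ≤ β − xᵀ Q x`; in particular,
if `xᵀ Q x > β` then `J*(f(x,u_0)) < J*(x)`. -/
theorem mpc_suboptimal_value_decrease {n m p N : ℕ} (hN : 1 ≤ N)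
    (f : (Fin n → ℝ) → (Fin m → ℝ) → (Fin n → ℝ))
    (Q P : Matrix (Fin n) (Fin n) ℝ) (R : Matrix (Fin m) (Fin m) ℝ)
    (hQ : Q.PosSemidef) (hR : R.PosSemidef) (hP : P.PosSemidef)
    (g : (Fin n → ℝ) → (Fin p → ℝ)) (umin umax : Fin m → ℝ)
    (α : ℝ) (hα : 0 ≤ α)
    (hXfX : ∀ z : Fin n → ℝ, z ⬝ᵥ P *ᵥ z ≤ α → g z ≤ 0)
    (κ : (Fin n → ℝ) → (Fin m → ℝ))
    (hκ : ∀ z : Fin n → ℝ, z ⬝ᵥ P *ᵥ z ≤ α →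
      f z (κ z) ⬝ᵥ P *ᵥ f z (κ z) - z ⬝ᵥ P *ᵥ z
        ≤ -(z ⬝ᵥ Q *ᵥ z + κ z ⬝ᵥ R *ᵥ κ z))
    (hκU : ∀ z : Fin n → ℝ, z ⬝ᵥ P *ᵥ z ≤ α → umin ≤ κ z ∧ κ z ≤ umax)
    (β : ℝ) (hβ : 0 < β)
    (x : Fin n → ℝ) (u : ℕ → Fin m → ℝ)
    (hu : u ∈ mpcFeasible N f P g umin umax α x)
    (hsub : mpcCost N f Q P R x u ≤ mpcValue N f Q P R g umin umax α x + β) :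
    mpcValue N f Q P R g umin umax α (f x (u 0))
        - mpcValue N f Q P R g umin umax α x
      ≤ β - x ⬝ᵥ Q *ᵥ x ∧
    (β < x ⬝ᵥ Q *ᵥ x →
      mpcValue N f Q P R g umin umax α (f x (u 0))
        < mpcValue N f Q P R g umin umax α x) := by
  obtain ⟨k, rfl⟩ : ∃ k, N = k + 1 := ⟨N - 1, by omega⟩
  obtain ⟨hg, hU, hT⟩ := hu
  have q : ∀ z, 0 ≤ z ⬝ᵥ Q *ᵥ z := fun z => by simpa using hQ.dotProduct_mulVec_nonneg z
  have r : ∀ z, 0 ≤ z ⬝ᵥ R *ᵥ z := fun z => by simpa using hR.dotProduct_mulVec_nonneg z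
  set z := mpcTraj f x u (k + 1) with hz
  set v := mpcShift k u (κ z) with hv
  have htraj : ∀ i ≤ k, mpcTraj f (f x (u 0)) v i = mpcTraj f x u (i + 1) :=
    fun i hi => mpcTraj_shift f x u (κ z) k i hi
  have hvlt : ∀ i < k, v i = u (i + 1) := fun i hi => if_pos hi
  have hvk : v k = κ z := if_neg (lt_irrefl k)
  have hend : mpcTraj f (f x (u 0)) v (k + 1) = f z (κ z) := by
    rw [mpcTraj, htraj k le_rfl, hvk]
  have hdec := hκ z hT
  have hvfeas : v ∈ mpcFeasible (k + 1) f P g umin umax α (f x (u 0)) := by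
    refine ⟨fun i hi => ?_, fun i hi => ?_, ?_⟩
    · rw [htraj i (by omega)]
      rcases Nat.lt_succ_iff_lt_or_eq.mp hi with h | rfl
      · exact hg _ (by omega)
      · exact hXfX z hT
    · rcases Nat.lt_succ_iff_lt_or_eq.mp hi with h | rfl
      · rw [hvlt i h]
        exact hU _ (by omega)
      · rw [hvk]
        exact hκU z hT
    · rw [hend]
      linarith [q z, r (κ z)]
  have hcost : mpcCost (k + 1) f Q P R (f x (u 0)) v
      ≤ mpcCost (k + 1) f Q P R x u - x ⬝ᵥ Q *ᵥ x := by
    -- Both costs share the stage costs at `x̄_1, …, x̄_k`: split off the last term of the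
    -- shifted sum and the first term of the original one.
    have hsum : ∑ i ∈ Finset.range k, (mpcTraj f (f x (u 0)) v i ⬝ᵥ
          Q *ᵥ mpcTraj f (f x (u 0)) v i + v i ⬝ᵥ R *ᵥ v i)
        = ∑ i ∈ Finset.range k, (mpcTraj f x u (i + 1) ⬝ᵥ
          Q *ᵥ mpcTraj f x u (i + 1) + u (i + 1) ⬝ᵥ R *ᵥ u (i + 1)) := by
      refine Finset.sum_congr rfl fun i hi => ?_
      have hi' := Finset.mem_range.mp hi
      rw [htraj i hi'.le, hvlt i hi']
    have hzero : mpcTraj f x u 0 = x := rfl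
    unfold mpcCost
    rw [Finset.sum_range_succ, hsum, Finset.sum_range_succ', hend, htraj k le_rfl, hvk, hzero,
      ← hz]
    linarith [r (u 0)]
  have hle : mpcValue (k + 1) f Q P R g umin umax α (f x (u 0))
      ≤ mpcCost (k + 1) f Q P R (f x (u 0)) v := by
    refine csInf_le ⟨0, ?_⟩ ⟨v, hvfeas, rfl⟩
    rintro _ ⟨w, _, rfl⟩
    exact mpcCost_nonneg _ f hQ hR hP _ w
  exact ⟨by linarith, fun h => by linarith⟩
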